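/- arXiv:2301.04295 — 2 statements merged into one kernel-verified Lean document; each statement's English description precedes it below -/
import Mathlib

section
/- Let T be a nonempty string of length n whose last symbol occurs exactly once in T. Fix 1 ≤ i ≤ n, let c = T[i] and S = T[i+1:], so that T[i:] = c·S. Let U be the longest prefix of c·S that is an infix of S (the insertion point), and assume U is a type-2 node of LST(S). Let Z be a type-1 node of LST(S) such that U is a proper prefix of Z and no string V with U a proper prefix of V and V a proper prefix of Z is a type-1 node of LST(S). Then for every symbol d such that [d] ++ Z is a node of LST(S), the string [d] ++ U is a type-2 node of LST(c·S). -/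
/-- `U` is right-branching in `T`: there are distinct symbols `a ≠ b` with both
`U ++ [a]` and `U ++ [b]` infixes of `T`. -/
def RightBranching {σ : Type*} (T U : List σ) : Prop :=
  ∃ a b : σ, a ≠ b ∧ (U ++ [a]) <:+: T ∧ (U ++ [b]) <:+: T

/-- `U` is a type-1 node of `LST(T)`. -/
def LType1 {σ : Type*} (T U : List σ) : Prop :=
  U <:+: T ∧ (U = [] ∨ U <:+ T ∨ RightBranching T U)

/-- `U` is a type-2 node of `LST(T)`. -/
def LType2 {σ : Type*} (T U : List σ) : Prop :=
  U <:+: T ∧ ¬ LType1 T U ∧ LType1 T U.tail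

/-- `U` is a node of `LST(T)`: type-1 or type-2. -/
def LNode {σ : Type*} (T U : List σ) : Prop :=
  LType1 T U ∨ LType2 T U

/-- `U` occurs in `T` at (0-based) position `p`. -/
def OccursAt {σ : Type*} (T U : List σ) (p : ℕ) : Prop :=
  U <+: T.drop p ∧ p + U.length ≤ T.length

/-- `U` occurs exactly once in `T`. -/
def OccursOnce {σ : Type*} (T U : List σ) : Prop :=
  ∃! p : ℕ, OccursAt T U p

/-- `U` occurs at least twice in `T`. -/
def OccursTwice {σ : Type*} (T U : List σ) : Prop :=
  ∃ p q : ℕ, p ≠ q ∧ OccursAt T U p ∧ OccursAt T U q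

/-- `U` is a type-1 node of `preLST(T)`. -/
def PType1 {σ : Type*} (T U : List σ) : Prop :=
  U <:+: T ∧ (U = [] ∨ RightBranching T U ∨ (U ≠ [] ∧ U <:+ T ∧ OccursOnce T U))

/-- `U` is a type-2 node of `preLST(T)`. -/
def PType2 {σ : Type*} (T U : List σ) : Prop :=
  U <:+: T ∧ ¬ PType1 T U ∧ PType1 T U.tail

/-- `U` is a node of `preLST(T)`: type-1 or type-2. -/
def PNode {σ : Type*} (T U : List σ) : Prop :=
  PType1 T U ∨ PType2 T U

/-!
As `U` is not a suffix of `S`, some occurrence of `U` in `S` is followed by a symbol; it differs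
from the symbol following the prefix `U` of `c·S`, since otherwise `U` would not be the longest
prefix of `c·S` that occurs in `S`. So `U` branches in `c·S`. On the other hand, `d·U` can be a
suffix of `c·S`, or branch in it, only if `U` already is a suffix of `S` or branches in it: at most
the first symbol of an occurrence of `d·U` lies outside `S`.
-/

section

variable {σ : Type*} {c d : σ} {S T U : List σ}

theorem infix_of_cons_infix_cons (h : (d :: U) <:+: (c :: S)) : U <:+: S := by
  rcases List.infix_cons_iff.mp h with hpre | hinf
  · exact (List.cons_prefix_cons.mp hpre).2.isInfix
  · exact (List.suffix_cons d U).isInfix.trans hinf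

theorem suffix_of_cons_suffix_cons (h : (d :: U) <:+ (c :: S)) : U <:+ S := by
  rcases List.suffix_cons_iff.mp h with heq | hsuf
  · exact (List.cons.inj heq).2 ▸ List.suffix_rfl
  · exact (List.suffix_cons d U).trans hsuf

theorem exists_append_singleton_infix_of_not_suffix (hinf : U <:+: T) (hsuf : ¬ U <:+ T) :
    ∃ b, (U ++ [b]) <:+: T := by
  obtain ⟨X, _ | ⟨b, Y⟩, rfl⟩ := hinf
  · simp at hsuf
  · exact ⟨b, X, Y, by simp⟩

theorem RightBranching.of_cons_cons (h : RightBranching (c :: S) (d :: U)) :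
    RightBranching S U := by
  obtain ⟨a, b, hab, ha, hb⟩ := h
  exact ⟨a, b, hab, infix_of_cons_infix_cons ha, infix_of_cons_infix_cons hb⟩

theorem LType1.of_cons_cons (h : LType1 (c :: S) (d :: U)) : LType1 S U := by
  obtain ⟨hinf, hnil | hsuf | hbranch⟩ := h
  · exact absurd hnil (List.cons_ne_nil d U)
  · exact ⟨infix_of_cons_infix_cons hinf, .inr (.inl (suffix_of_cons_suffix_cons hsuf))⟩
  · exact ⟨infix_of_cons_infix_cons hinf, .inr (.inr hbranch.of_cons_cons)⟩

theorem LNode.isInfix (h : LNode T U) : U <:+: T :=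
  h.elim And.left And.left

/-- `U` is the insertion point of `c·S` into `LST(S)`: the longest prefix of `c·S` that occurs in
`S`. Two prefixes of `c·S` are comparable, so maximality is phrased by length. -/
structure IsInsertionPoint (c : σ) (S U : List σ) : Prop where
  isPrefix : U <+: (c :: S)
  isInfix : U <:+: S
  length_le : ∀ V : List σ, V <+: (c :: S) → V <:+: S → V.length ≤ U.length

theorem IsInsertionPoint.rightBranching (hU : IsInsertionPoint c S U) (hsuf : ¬ U <:+ S) :
    RightBranching (c :: S) U := by
  have hlt : U.length < (c :: S).length := Nat.lt_succ_of_le hU.isInfix.length_le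
  have ha := List.concat_get_prefix hU.isPrefix hlt
  obtain ⟨b, hb⟩ := exists_append_singleton_infix_of_not_suffix hU.isInfix hsuf
  refine ⟨_, b, fun hab => ?_, ha.isInfix, List.infix_cons hb⟩
  have hlen := hU.length_le (U ++ [b]) (hab ▸ ha) hb
  simp at hlen

end

theorem stmt_6_general {σ : Type*} {c d : σ} {S U : List σ} (hU : IsInsertionPoint c S U)
    (hU1 : ¬ LType1 S U) (hdU : (d :: U) <:+: (c :: S)) : LType2 (c :: S) (d :: U) := by
  have hsuf : ¬ U <:+ S := fun h => hU1 ⟨hU.isInfix, .inr (.inl h)⟩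
  have hU1' : LType1 (c :: S) U := ⟨hU.isPrefix.isInfix, .inr (.inr (hU.rightBranching hsuf))⟩
  exact ⟨hdU, fun h => hU1 h.of_cons_cons, hU1'⟩

/-- With `T[i:] = c·S`, `U` the insertion point (the longest prefix of
`c·S` that is an infix of `S`) assumed to be a type-2 node of `LST(S)`, and `Z`
the nearest type-1 descendant of `U` in `LST(S)`: for every symbol `d` such that
`d·Z` is a node of `LST(S)`, the string `d·U` is a type-2 node of `LST(c·S)`. -/
theorem stmt_6 {σ : Type*} [DecidableEq σ] (T : List σ) (hne : T ≠ [])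
    (hterm : OccursOnce T [T.getLast hne])
    (i : ℕ) (hi1 : 1 ≤ i) (hin : i ≤ T.length)
    (c : σ) (S : List σ) (hcs : T.drop (i - 1) = c :: S)
    (U : List σ) (hUpre : U <+: (c :: S)) (hUinf : U <:+: S)
    (hUlong : ∀ V : List σ, V <+: (c :: S) → V <:+: S → V.length ≤ U.length)
    (hU2 : LType2 S U)
    (Z : List σ) (hZ1 : LType1 S Z) (hUZ : U <+: Z) (hUZne : U ≠ Z)
    (hZmin : ∀ V : List σ, U <+: V → U ≠ V → V <+: Z → V ≠ Z → ¬ LType1 S V) :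
    ∀ d : σ, LNode S (d :: Z) → LType2 (c :: S) (d :: U) :=
  fun _ hdZ => stmt_6_general ⟨hUpre, hUinf, hUlong⟩ hU2.2.1 <|
    (List.cons_prefix_cons.mpr ⟨rfl, hUZ⟩).isInfix.trans (List.infix_cons hdZ.isInfix)
end

section
/- Let W be a nonempty string and let k = k(W) be its active position, i.e., the least index k such that the suffix W[k:] occurs at least twice in W. Then there exists an index l with 1 ≤ l ≤ k such that for every j with 1 ≤ j < k: the string obtained from the suffix W[j:] by removing its last symbol is a node of preLST(W) if and only if j ≥ l. (Equivalently, among the leaves W[j:] of preLST(W) for 1 ≤ j < k, W[j:] is a +-node exactly for j < l, where a leaf is a +-node iff the string obtained by removing its last symbol is not a node of preLST(W).) -/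
/-!
A node `U` of `preLST(T)` for which some `U ++ [c]` still occurs in `T` cannot be a type-1 node by
being a suffix of `T` that occurs only once: the occurrence inside `U ++ [c]` ends before the end
of `T`. Hence `U` is empty, right-branching or a type-2 node, and in each case `U.tail` is again a
node, extended by the same symbol `c`. Iterating, all suffixes of `U` are nodes. The truncated
suffixes of `W` are suffixes of one another, all extended by the last symbol of `W`.
-/

section

variable {σ : Type*} {T U V : List σ} {c : σ}

theorem OccursAt.of_prefix {p : ℕ} (h : OccursAt T U p) (hVU : V <+: U) : OccursAt T V p :=
  ⟨hVU.trans h.1, (Nat.add_le_add_left hVU.length_le p).trans h.2⟩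

theorem exists_occursAt_of_infix (h : U <:+: T) : ∃ p, OccursAt T U p := by
  obtain ⟨X, Y, rfl⟩ := h
  exact ⟨X.length, by simp [OccursAt]⟩

theorem occursAt_of_suffix (h : U <:+ T) : OccursAt T U (T.length - U.length) :=
  ⟨List.suffix_iff_eq_drop.mp h ▸ List.prefix_rfl, (Nat.sub_add_cancel h.length_le).le⟩

theorem not_occursOnce_of_suffix_of_append_singleton_infix
    (hsuffix : U <:+ T) (hext : U ++ [c] <:+: T) : ¬ OccursOnce T U := by
  intro honce
  obtain ⟨p, hp⟩ := exists_occursAt_of_infix hext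
  have hend : p + U.length + 1 ≤ T.length := by simpa [Nat.add_assoc] using hp.2
  have hsame : p = T.length - U.length :=
    honce.unique (hp.of_prefix (List.prefix_append U [c])) (occursAt_of_suffix hsuffix)
  omega

theorem RightBranching.of_suffix (h : RightBranching T U) (hVU : V <:+ U) : RightBranching T V := by
  obtain ⟨a, b, hab, ha, hb⟩ := h
  have extend (c : σ) : V ++ [c] <:+ U ++ [c] := List.suffix_append_self_iff.mpr hVU
  exact ⟨a, b, hab, (extend a).isInfix.trans ha, (extend b).isInfix.trans hb⟩

theorem PType1.nil (T : List σ) : PType1 T [] :=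
  ⟨List.nil_infix, Or.inl rfl⟩

theorem PNode.pType1_tail (h : PNode T U) (hext : U ++ [c] <:+: T) : PType1 T U.tail := by
  rcases h with ⟨hinfix, rfl | hbranch | ⟨-, hsuffix, honce⟩⟩ | ⟨-, -, htail⟩
  · exact PType1.nil T
  · have htail_suffix : U.tail <:+ U := List.tail_suffix U
    exact ⟨htail_suffix.isInfix.trans hinfix, Or.inr (Or.inl (hbranch.of_suffix htail_suffix))⟩
  · exact absurd honce (not_occursOnce_of_suffix_of_append_singleton_infix hsuffix hext)
  · exact htail

theorem PNode.of_suffix (h : PNode T U) (hext : U ++ [c] <:+: T) (hVU : V <:+ U) : PNode T V := by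
  induction U with
  | nil => rwa [List.suffix_nil.mp hVU]
  | cons x U ih =>
    rcases List.suffix_cons_iff.mp hVU with rfl | hVU
    · exact h
    · exact ih (Or.inl (h.pType1_tail hext))
        ((List.suffix_cons x (U ++ [c])).isInfix.trans hext) hVU

theorem PNode.dropLast_of_suffix {S R : List σ} (h : PNode T S.dropLast)
    (hS : S <:+: T) (hRS : R <:+ S) : PNode T R.dropLast := by
  rcases S.eq_nil_or_concat' with rfl | ⟨U, c, rfl⟩
  · rwa [List.suffix_nil.mp hRS]
  · rw [List.dropLast_concat] at h
    rcases List.suffix_concat_iff.mp hRS with rfl | ⟨V, rfl, hVU⟩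
    · exact Or.inl (PType1.nil T)
    · rw [List.dropLast_concat]
      exact h.of_suffix hS hVU

end

theorem stmt_7_general {σ : Type*} (W : List σ) :
    ∃ l : ℕ, ∀ i : ℕ, PNode W (W.drop i).dropLast ↔ l ≤ i := by
  let starts : Set ℕ := {i | PNode W (W.drop i).dropLast}
  have hlength : W.length ∈ starts := Or.inl (by simpa using PType1.nil W)
  have hupward (i j : ℕ) (hij : i ≤ j) (hi : i ∈ starts) : j ∈ starts :=
    hi.dropLast_of_suffix (List.drop_suffix i W).isInfix (List.drop_suffix_drop_left W hij)
  have hstarts : starts = Set.Ici (sInf starts) :=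
    Nat.eq_Ici_of_nonempty_of_upward_closed ⟨W.length, hlength⟩ hupward
  exact ⟨sInf starts, Set.ext_iff.mp hstarts⟩

/-- Let `k` be the active position of a nonempty string `W`.  Then
there is a boundary `l` with `1 ≤ l ≤ k` such that for all `1 ≤ j < k`, the string
obtained from the leaf `W[j:]` by removing its last symbol is a node of
`preLST(W)` iff `j ≥ l`. -/
theorem stmt_7 {σ : Type*} [DecidableEq σ] (W : List σ) (hne : W ≠ [])
    (k : ℕ) (hk1 : 1 ≤ k) (hk2 : k ≤ W.length + 1)
    (hkocc : OccursTwice W (W.drop (k - 1)))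
    (hkmin : ∀ j : ℕ, 1 ≤ j → j < k → ¬ OccursTwice W (W.drop (j - 1))) :
    ∃ l : ℕ, 1 ≤ l ∧ l ≤ k ∧
      ∀ j : ℕ, 1 ≤ j → j < k →
        (PNode W (W.drop (j - 1)).dropLast ↔ l ≤ j) := by
  obtain ⟨l, hl⟩ := stmt_7_general W
  exact ⟨min (l + 1) k, by omega, by omega, fun j hj hjk => (hl (j - 1)).trans (by omega)⟩
end
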